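/- arXiv:1906.10150 — 7 statements merged into one kernel-verified Lean document; each statement's English description precedes it below -/
import Mathlib

section
/- For every entropy function S on three parties {A, B, V} satisfying SSA and WM, f^R is bounded below by half the mutual information: (1/2)(S_{AB} + 2 S_{AV} − S_{ABV} − S_V) ≥ (1/2)(S_A + S_B − S_{AB}). -/
/-- Strong subadditivity for an entropy function `S` on subsets of the party set `P`:
for pairwise disjoint `X Y Z`, `S(X∪Z) + S(Y∪Z) ≥ S(X∪Y∪Z) + S(Z)`. -/
def SSAfn {P : Type} [DecidableEq P] (S : Finset P → ℝ) : Prop :=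
  ∀ X Y Z : Finset P, Disjoint X Y → Disjoint X Z → Disjoint Y Z →
    S (X ∪ Z) + S (Y ∪ Z) ≥ S (X ∪ Y ∪ Z) + S Z

/-- Weak monotonicity for an entropy function `S` on subsets of the party set `P`:
for pairwise disjoint `X Y Z`, `S(X∪Z) + S(Y∪Z) ≥ S(X) + S(Y)`. -/
def WMfn {P : Type} [DecidableEq P] (S : Finset P → ℝ) : Prop :=
  ∀ X Y Z : Finset P, Disjoint X Y → Disjoint X Z → Disjoint Y Z →
    S (X ∪ Z) + S (Y ∪ Z) ≥ S X + S Y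

/-- Parties: `0 = A`, `1 = B`, `2 = V`.  For every entropy function satisfying SSA and WM,
`f^R = (1/2)(S_AB + 2 S_AV − S_ABV − S_V)` is at least `(1/2) I_{A:B}`. -/
theorem fR_ge_half_mutual_information (S : Finset (Fin 3) → ℝ)
    (hempty : S ∅ = 0) (hSSA : SSAfn S) (hWM : WMfn S) :
    (1/2) * (S {0, 1} + 2 * S {0, 2} - S {0, 1, 2} - S {2}) ≥
      (1/2) * (S {0} + S {1} - S {0, 1}) := by
  have h1 := hSSA {1} {2} {0} (by decide) (by decide) (by decide)
  have h2 := hWM {1} {2} {0} (by decide) (by decide) (by decide)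
  rw [show ({1} ∪ {0} : Finset (Fin 3)) = {0, 1} by decide,
    show ({2} ∪ {0} : Finset (Fin 3)) = {0, 2} by decide] at h1 h2
  rw [show ({1} ∪ {2} ∪ {0} : Finset (Fin 3)) = {0, 1, 2} by decide] at h1
  linarith
end

section
/- Superadditivity of f^R: for every entropy function S on five parties {A1, A2, B1, B2, V} satisfying SSA, if S_{A1B1} + S_{A2B2} = S_{A1A2B1B2} (i.e. I_{A1B1:A2B2} = 0), then S_{A1A2B1B2} + 2 S_{A1A2V} − S_{A1A2B1B2V} − S_V ≥ (S_{A1B1} + 2 S_{A1A2V} − S_{A1A2B1V} − S_{A2V}) + (S_{A2B2} + 2 S_{A1A2V} − S_{A1A2B2V} − S_{A1V}); that is, f^R of the joint system (A = A1A2, B = B1B2, V) is at least f^R(A1, B1, V1 = A2V) + f^R(A2, B2, V2 = A1V). -/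
/-- Parties: `0 = A1`, `1 = A2`, `2 = B1`, `3 = B2`, `4 = V`.  Superadditivity of `f^R`
(stated without the overall factor 1/2): if `S_{A1B1} + S_{A2B2} = S_{A1A2B1B2}`
(i.e. `I_{A1B1:A2B2} = 0`), then
`f^R(A1A2, B1B2, V) ≥ f^R(A1, B1, A2V) + f^R(A2, B2, A1V)`
for every entropy function satisfying SSA. -/
theorem fR_superadditivity (S : Finset (Fin 5) → ℝ)
    (hempty : S ∅ = 0) (hSSA : SSAfn S)
    (hprod : S {0, 2} + S {1, 3} = S {0, 1, 2, 3}) :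
    S {0, 1, 2, 3} + 2 * S {0, 1, 4} - S {0, 1, 2, 3, 4} - S {4} ≥
      (S {0, 2} + 2 * S {0, 1, 4} - S {0, 1, 2, 4} - S {1, 4}) +
        (S {1, 3} + 2 * S {0, 1, 4} - S {0, 1, 3, 4} - S {0, 4}) := by
  have h1 := hSSA {2} {3} {0, 1, 4} (by decide) (by decide) (by decide)
  have h2 := hSSA {0} {1} {4} (by decide) (by decide) (by decide)
  rw [show ({2} ∪ {0, 1, 4} : Finset (Fin 5)) = {0, 1, 2, 4} by decide,
    show ({3} ∪ {0, 1, 4} : Finset (Fin 5)) = {0, 1, 3, 4} by decide,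
    show ({2} ∪ {3} ∪ {0, 1, 4} : Finset (Fin 5)) = {0, 1, 2, 3, 4} by decide] at h1
  rw [show ({0} ∪ {4} : Finset (Fin 5)) = {0, 4} by decide,
    show ({1} ∪ {4} : Finset (Fin 5)) = {1, 4} by decide,
    show ({0} ∪ {1} ∪ {4} : Finset (Fin 5)) = {0, 1, 4} by decide] at h2
  linarith
end

section
/- Non-negativity in V is necessary for a finite optimized measure: let α ∈ ℝ^7 with α_V + α_AV + α_BV + α_ABV < 0, and let S0 be any entropy function on the two parties {A, B} satisfying SSA and WM. Then for every real number M there exists an entropy function S on the three parties {A, B, V} satisfying SSA and WM, agreeing with S0 on all subsets of {A, B}, such that f^α(S) < M. In fact, for every c ≥ 0 the function S defined by S(X) = S0(X ∩ {A,B}) + c if V ∈ X and S(X) = S0(X) otherwise is an entropy function satisfying SSA and WM, and f^α(S) = (α_A + α_AV)·S0({A}) + (α_B + α_BV)·S0({B}) + (α_AB + α_ABV)·S0({A,B}) + (α_V + α_AV + α_BV + α_ABV)·c, which tends to −∞ as c → ∞. -/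
/-- Parties of the three-party side: `0 = A`, `1 = B`, `2 = V`; components of `α`:
`0 = α_A`, `1 = α_B`, `2 = α_V`, `3 = α_AB`, `4 = α_AV`, `5 = α_BV`, `6 = α_ABV`. -/
noncomputable def fAlpha (α : Fin 7 → ℝ) (S : Finset (Fin 3) → ℝ) : ℝ :=
  α 0 * S {0} + α 1 * S {1} + α 2 * S {2} + α 3 * S {0, 1} +
    α 4 * S {0, 2} + α 5 * S {1, 2} + α 6 * S {0, 1, 2}

/-- Restriction of a subset of the parties `{A, B, V} = Fin 3` to the parties
`{A, B} = Fin 2` (i.e. the pullback of `X ∩ {A, B}` along `Fin.castSucc`). -/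
def restrictAB (X : Finset (Fin 3)) : Finset (Fin 2) :=
  Finset.univ.filter (fun i : Fin 2 => (Fin.castSucc i : Fin 3) ∈ X)

/-- The extension `S` of `S0` defined by `S(X) = S0(X ∩ {A,B}) + c` if `V ∈ X` and
`S(X) = S0(X)` otherwise. -/
noncomputable def extendByC (S0 : Finset (Fin 2) → ℝ) (c : ℝ) (X : Finset (Fin 3)) : ℝ :=
  S0 (restrictAB X) + (if (2 : Fin 3) ∈ X then c else 0)

theorem restrictAB_union (X Y : Finset (Fin 3)) :
    restrictAB (X ∪ Y) = restrictAB X ∪ restrictAB Y := by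
  ext i
  simp [restrictAB]

theorem restrictAB_disjoint {X Y : Finset (Fin 3)} (h : Disjoint X Y) :
    Disjoint (restrictAB X) (restrictAB Y) := by
  rw [Finset.disjoint_left] at h ⊢
  intro i hi hj
  simp only [restrictAB, Finset.mem_filter, Finset.mem_univ, true_and] at hi hj
  exact h hi hj

theorem restrictAB_image (X : Finset (Fin 2)) :
    restrictAB (X.image Fin.castSucc) = X := by
  ext i
  simp [restrictAB]

theorem extendByC_ssa (S0 : Finset (Fin 2) → ℝ) (h : SSAfn S0) (c : ℝ) (hc : 0 ≤ c) :
    SSAfn (extendByC S0 c) := by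
  intro X Y Z hXY hXZ hYZ
  have h1 := h _ _ _ (restrictAB_disjoint hXY) (restrictAB_disjoint hXZ)
    (restrictAB_disjoint hYZ)
  simp only [extendByC, restrictAB_union, Finset.mem_union]
  by_cases hx : (2 : Fin 3) ∈ X <;> by_cases hy : (2 : Fin 3) ∈ Y <;>
    by_cases hz : (2 : Fin 3) ∈ Z <;> simp [hx, hy, hz, -Finset.union_assoc] <;> linarith

theorem extendByC_wm (S0 : Finset (Fin 2) → ℝ) (h : WMfn S0) (c : ℝ) (hc : 0 ≤ c) :
    WMfn (extendByC S0 c) := by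
  intro X Y Z hXY hXZ hYZ
  have h1 := h _ _ _ (restrictAB_disjoint hXY) (restrictAB_disjoint hXZ)
    (restrictAB_disjoint hYZ)
  simp only [extendByC, restrictAB_union, Finset.mem_union]
  by_cases hx : (2 : Fin 3) ∈ X <;> by_cases hy : (2 : Fin 3) ∈ Y <;>
    by_cases hz : (2 : Fin 3) ∈ Z <;> simp [hx, hy, hz, -Finset.union_assoc] <;> linarith

theorem extendByC_image (S0 : Finset (Fin 2) → ℝ) (c : ℝ) (X : Finset (Fin 2)) :
    extendByC S0 c (X.image Fin.castSucc) = S0 X := by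
  have : (2 : Fin 3) ∉ X.image Fin.castSucc := by
    revert X
    decide
  simp only [extendByC, restrictAB_image, if_neg this, add_zero]

theorem fAlpha_extendByC (α : Fin 7 → ℝ) (S0 : Finset (Fin 2) → ℝ) (h0 : S0 ∅ = 0) (c : ℝ) :
    fAlpha α (extendByC S0 c) =
        (α 0 + α 4) * S0 {0} + (α 1 + α 5) * S0 {1} + (α 3 + α 6) * S0 {0, 1} +
          (α 2 + α 4 + α 5 + α 6) * c := by
  have e1 : restrictAB {0} = {0} := by decide
  have e2 : restrictAB {1} = {1} := by decide
  have e3 : restrictAB {2} = ∅ := by decide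
  have e4 : restrictAB {0, 1} = {0, 1} := by decide
  have e5 : restrictAB {0, 2} = {0} := by decide
  have e6 : restrictAB {1, 2} = {1} := by decide
  have e7 : restrictAB {0, 1, 2} = {0, 1} := by decide
  simp only [fAlpha, extendByC, e1, e2, e3, e4, e5, e6, e7, h0]
  simp
  ring

/-- Non-negativity in `V` is necessary for a finite optimized measure: if
`α_V + α_AV + α_BV + α_ABV < 0` then for any two-party entropy function `S0` satisfying
SSA and WM and any `M` there is a three-party entropy function `S` satisfying SSA and WM,
agreeing with `S0` on subsets of `{A, B}`, with `f^α(S) < M`.  In fact, for every `c ≥ 0`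
the explicit extension `extendByC S0 c` works and its `f^α`-value is the stated linear
function of `c`, which tends to `−∞` as `c → ∞`. -/
theorem nonnegativity_in_V_necessary (α : Fin 7 → ℝ)
    (hα : α 2 + α 4 + α 5 + α 6 < 0)
    (S0 : Finset (Fin 2) → ℝ) (h0 : S0 ∅ = 0) (hSSA0 : SSAfn S0) (hWM0 : WMfn S0) :
    (∀ M : ℝ, ∃ S : Finset (Fin 3) → ℝ, S ∅ = 0 ∧ SSAfn S ∧ WMfn S ∧
      (∀ X : Finset (Fin 2), S (X.image Fin.castSucc) = S0 X) ∧ fAlpha α S < M) ∧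
    (∀ c : ℝ, 0 ≤ c →
      extendByC S0 c ∅ = 0 ∧ SSAfn (extendByC S0 c) ∧ WMfn (extendByC S0 c) ∧
      (∀ X : Finset (Fin 2), extendByC S0 c (X.image Fin.castSucc) = S0 X) ∧
      fAlpha α (extendByC S0 c) =
        (α 0 + α 4) * S0 {0} + (α 1 + α 5) * S0 {1} + (α 3 + α 6) * S0 {0, 1} +
          (α 2 + α 4 + α 5 + α 6) * c) ∧
    Filter.Tendsto (fun c : ℝ => fAlpha α (extendByC S0 c)) Filter.atTop Filter.atBot := by
  have hT : Filter.Tendsto (fun c : ℝ => fAlpha α (extendByC S0 c))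
      Filter.atTop Filter.atBot := by
    simp only [fAlpha_extendByC α S0 h0]
    exact Filter.tendsto_atBot_add_const_left _ _
      (Filter.tendsto_id.const_mul_atTop_of_neg hα)
  have hE : ∀ c : ℝ, extendByC S0 c ∅ = 0 := by
    intro c
    have e : restrictAB ∅ = ∅ := by decide
    simp [extendByC, e, h0]
  refine ⟨?_, ?_, hT⟩
  · intro M
    obtain ⟨c, hM, hc⟩ := ((hT.eventually (Filter.eventually_lt_atBot M)).and
      (Filter.eventually_ge_atTop (0 : ℝ))).exists
    exact ⟨extendByC S0 c, hE c, extendByC_ssa S0 hSSA0 c hc, extendByC_wm S0 hWM0 c hc,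
      extendByC_image S0 c, hM⟩
  · intro c hc
    exact ⟨hE c, extendByC_ssa S0 hSSA0 c hc, extendByC_wm S0 hWM0 c hc,
      extendByC_image S0 c, fAlpha_extendByC α S0 h0 c⟩
end

section
/- Characterization of the 00-monotone cone (Table 1): a vector α ∈ ℝ^7 with components (α_A, α_B, α_V, α_AB, α_AV, α_BV, α_ABV) is 0A-valid and 0B-valid if and only if α is a nonnegative real linear combination of the seven vectors (1,1,0,−1,0,0,0), (1,0,0,0,−1,0,0), (0,0,0,0,1,1,−1), (0,0,0,1,0,0,−1), (0,1,0,0,0,−1,0), (0,0,1,0,0,0,0), (0,0,−1,0,0,0,0). -/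
/-- `α ∈ ℝ^7` (components ordered `α_A, α_B, α_V, α_AB, α_AV, α_BV, α_ABV`) is 0A-valid:
for every entropy function on the four parties `0 = A1`, `1 = A2`, `2 = B`, `3 = V`
satisfying SSA and WM,
`α_A S_{A2|A1} + α_AB S_{A2|A1B} + α_AV S_{A2|A1V} + α_ABV S_{A2|A1BV} ≥ 0`. -/
def Valid0A (α : Fin 7 → ℝ) : Prop :=
  ∀ S : Finset (Fin 4) → ℝ, S ∅ = 0 → SSAfn S → WMfn S →
    α 0 * (S {0, 1} - S {0}) + α 3 * (S {0, 1, 2} - S {0, 2}) +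
      α 4 * (S {0, 1, 3} - S {0, 3}) + α 6 * (S {0, 1, 2, 3} - S {0, 2, 3}) ≥ 0

/-- `α ∈ ℝ^7` is 1A-valid: for every entropy function on the four parties
`0 = A1`, `1 = A2`, `2 = B`, `3 = V` satisfying SSA and WM,
`α_A S_{A2|A1} + α_AB S_{A2|A1B} − α_BV S_{A2|BV} − α_V S_{A2|V} ≥ 0`. -/
def Valid1A (α : Fin 7 → ℝ) : Prop :=
  ∀ S : Finset (Fin 4) → ℝ, S ∅ = 0 → SSAfn S → WMfn S →
    α 0 * (S {0, 1} - S {0}) + α 3 * (S {0, 1, 2} - S {0, 2}) -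
      α 5 * (S {1, 2, 3} - S {2, 3}) - α 2 * (S {1, 3} - S {3}) ≥ 0

/-- `α ∈ ℝ^7` is 0B-valid: for every entropy function on the four parties
`0 = A`, `1 = B1`, `2 = B2`, `3 = V` satisfying SSA and WM,
`α_B S_{B2|B1} + α_AB S_{B2|B1A} + α_BV S_{B2|B1V} + α_ABV S_{B2|B1AV} ≥ 0`. -/
def Valid0B (α : Fin 7 → ℝ) : Prop :=
  ∀ S : Finset (Fin 4) → ℝ, S ∅ = 0 → SSAfn S → WMfn S →
    α 1 * (S {1, 2} - S {1}) + α 3 * (S {0, 1, 2} - S {0, 1}) +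
      α 5 * (S {1, 2, 3} - S {1, 3}) + α 6 * (S {0, 1, 2, 3} - S {0, 1, 3}) ≥ 0

/-- The entropy function depending only on the number of parties from `T`. -/
def cardFn (T : Finset (Fin 4)) (g : ℕ → ℕ) (X : Finset (Fin 4)) : ℝ :=
  ((g ((X ∩ T).card) : ℕ) : ℝ)

theorem card_union_inter (T X Y : Finset (Fin 4)) (h : Disjoint X Y) :
    ((X ∪ Y) ∩ T).card = (X ∩ T).card + (Y ∩ T).card := by
  rw [Finset.union_inter_distrib_right]
  apply Finset.card_union_of_disjoint
  exact h.mono Finset.inter_subset_left Finset.inter_subset_left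

theorem cardFn_ssa (T : Finset (Fin 4)) (g : ℕ → ℕ)
    (hg : ∀ x y z, x + y + z ≤ T.card → g (x + y + z) + g z ≤ g (x + z) + g (y + z)) :
    SSAfn (cardFn T g) := by
  intro X Y Z hXY hXZ hYZ
  have hU : Disjoint (X ∪ Y) Z := Finset.disjoint_union_left.2 ⟨hXZ, hYZ⟩
  have hle : ((X ∪ Y ∪ Z) ∩ T).card ≤ T.card := Finset.card_le_card Finset.inter_subset_right
  have := hg (X ∩ T).card (Y ∩ T).card (Z ∩ T).card
  rw [card_union_inter _ _ _ hU, card_union_inter _ _ _ hXY] at hle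
  simp only [cardFn, card_union_inter _ _ _ hU, card_union_inter _ _ _ hXY,
    card_union_inter _ _ _ hXZ, card_union_inter _ _ _ hYZ]
  exact_mod_cast this hle

theorem cardFn_wm (T : Finset (Fin 4)) (g : ℕ → ℕ)
    (hg : ∀ x y z, x + y + z ≤ T.card → g x + g y ≤ g (x + z) + g (y + z)) :
    WMfn (cardFn T g) := by
  intro X Y Z hXY hXZ hYZ
  have hU : Disjoint (X ∪ Y) Z := Finset.disjoint_union_left.2 ⟨hXZ, hYZ⟩
  have hle : ((X ∪ Y ∪ Z) ∩ T).card ≤ T.card := Finset.card_le_card Finset.inter_subset_right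
  have := hg (X ∩ T).card (Y ∩ T).card (Z ∩ T).card
  rw [card_union_inter _ _ _ hU, card_union_inter _ _ _ hXY] at hle
  simp only [cardFn, card_union_inter _ _ _ hXZ, card_union_inter _ _ _ hYZ]
  exact_mod_cast this hle

/-- Classical (uniform-matroid) entropy: `k` independent bits shared among `T`. -/
theorem classical_ok (T : Finset (Fin 4)) (k : ℕ) :
    cardFn T (fun n => min n k) ∅ = 0 ∧ SSAfn (cardFn T (fun n => min n k)) ∧
      WMfn (cardFn T (fun n => min n k)) := by
  refine ⟨by simp [cardFn], cardFn_ssa _ _ ?_, cardFn_wm _ _ ?_⟩ <;>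
  · intro x y z _
    omega

/-- Maximally entangled pair on `T`. -/
theorem bell_ok (T : Finset (Fin 4)) (hT : T.card = 2) :
    cardFn T (fun n => min n (2 - n)) ∅ = 0 ∧ SSAfn (cardFn T (fun n => min n (2 - n))) ∧
      WMfn (cardFn T (fun n => min n (2 - n))) := by
  refine ⟨by simp [cardFn], cardFn_ssa _ _ ?_, cardFn_wm _ _ ?_⟩ <;>
  · intro x y z h
    rw [hT] at h
    omega

theorem ssa_of {S : Finset (Fin 4) → ℝ} (hS : SSAfn S) (X Y Z P Q R : Finset (Fin 4))
    (h : (Disjoint X Y ∧ Disjoint X Z ∧ Disjoint Y Z) ∧ X ∪ Z = P ∧ Y ∪ Z = Q ∧ X ∪ Y ∪ Z = R) :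
    S P + S Q ≥ S R + S Z := by
  obtain ⟨⟨h1, h2, h3⟩, rfl, rfl, rfl⟩ := h
  exact hS X Y Z h1 h2 h3

theorem ineqA {α : Fin 7 → ℝ} (h : Valid0A α) :
    α 0 + α 3 + α 4 + α 6 = 0 ∧ 0 ≤ α 0 ∧ 0 ≤ α 0 + α 3 ∧ 0 ≤ α 0 + α 4 ∧
      0 ≤ α 0 + α 3 + α 4 := by
  have h1 := h _ (classical_ok {1} 1).1 (classical_ok {1} 1).2.1 (classical_ok {1} 1).2.2
  have h2 := h _ (bell_ok {0, 1} rfl).1 (bell_ok {0, 1} rfl).2.1 (bell_ok {0, 1} rfl).2.2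
  have h3 := h _ (classical_ok {1, 2, 3} 1).1 (classical_ok {1, 2, 3} 1).2.1 (classical_ok {1, 2, 3} 1).2.2
  have h4 := h _ (classical_ok {1, 3} 1).1 (classical_ok {1, 3} 1).2.1 (classical_ok {1, 3} 1).2.2
  have h5 := h _ (classical_ok {1, 2} 1).1 (classical_ok {1, 2} 1).2.1 (classical_ok {1, 2} 1).2.2
  have h6 := h _ (classical_ok {1, 2, 3} 2).1 (classical_ok {1, 2, 3} 2).2.1 (classical_ok {1, 2, 3} 2).2.2
  simp +decide [cardFn] at h1
  simp +decide [cardFn] at h2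
  simp +decide [cardFn] at h3
  simp +decide [cardFn] at h4
  simp +decide [cardFn] at h5
  simp +decide [cardFn] at h6
  refine ⟨?_, ?_, ?_, ?_, ?_⟩ <;> linarith

theorem ineqB {α : Fin 7 → ℝ} (h : Valid0B α) :
    α 1 + α 3 + α 5 + α 6 = 0 ∧ 0 ≤ α 1 ∧ 0 ≤ α 1 + α 3 := by
  have h1 := h _ (classical_ok {2} 1).1 (classical_ok {2} 1).2.1 (classical_ok {2} 1).2.2
  have h2 := h _ (bell_ok {1, 2} rfl).1 (bell_ok {1, 2} rfl).2.1 (bell_ok {1, 2} rfl).2.2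
  have h3 := h _ (classical_ok {0, 2, 3} 1).1 (classical_ok {0, 2, 3} 1).2.1 (classical_ok {0, 2, 3} 1).2.2
  have h4 := h _ (classical_ok {2, 3} 1).1 (classical_ok {2, 3} 1).2.1 (classical_ok {2, 3} 1).2.2
  simp +decide [cardFn] at h1
  simp +decide [cardFn] at h2
  simp +decide [cardFn] at h3
  simp +decide [cardFn] at h4
  refine ⟨?_, ?_, ?_⟩ <;> linarith

/-- Characterization of the 00-monotone cone: `α` is 0A-valid and 0B-valid iff it is a
nonnegative linear combination of the seven extreme rays of Table 1. -/
theorem cone00_characterization (α : Fin 7 → ℝ) :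
    (Valid0A α ∧ Valid0B α) ↔
      ∃ c : Fin 7 → ℝ, (∀ i, 0 ≤ c i) ∧
        α = ∑ i, c i • (![![1, 1, 0, -1, 0, 0, 0], ![1, 0, 0, 0, -1, 0, 0],
          ![0, 0, 0, 0, 1, 1, -1], ![0, 0, 0, 1, 0, 0, -1], ![0, 1, 0, 0, 0, -1, 0],
          ![0, 0, 1, 0, 0, 0, 0], ![0, 0, -1, 0, 0, 0, 0]] : Fin 7 → Fin 7 → ℝ) i := by
  constructor
  · rintro ⟨hA, hB⟩
    obtain ⟨a0, a1, a2, a3, a4⟩ := ineqA hA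
    obtain ⟨b0, b1, b2⟩ := ineqB hB
    obtain ⟨t, t0, t1, t2, t3, t4⟩ : ∃ t : ℝ, 0 ≤ t ∧ -α 3 ≤ t ∧ t ≤ α 0 ∧ t ≤ α 1 ∧
        t ≤ α 0 + α 4 := by
      refine ⟨max 0 (-α 3), le_max_left _ _, le_max_right _ _, ?_, ?_, ?_⟩ <;>
        apply max_le <;> linarith
    refine ⟨![t, α 0 - t, α 0 + α 4 - t, α 3 + t, α 1 - t, max (α 2) 0, max (-α 2) 0], ?_, ?_⟩
    · intro i
      fin_cases i <;> simp <;> linarith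
    · have hv : α 2 = max (α 2) 0 - max (-α 2) 0 := by
        rcases le_total 0 (α 2) with h | h
        · rw [max_eq_left h, max_eq_right (by linarith)]; ring
        · rw [max_eq_right h, max_eq_left (by linarith)]; ring
      funext j
      fin_cases j <;> simp [Fin.sum_univ_succ] <;> linarith
  · rintro ⟨c, hc, rfl⟩
    have c0 := hc 0
    have c1 := hc 1
    have c2 := hc 2
    have c3 := hc 3
    have c4 := hc 4
    constructor
    · intro S _ hS _
      have s1 : S {0, 1} + S {0, 2} ≥ S {0, 1, 2} + S {0} :=
        ssa_of hS {1} {2} {0} _ _ _ (by decide)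
      have s2 : S {0, 1} + S {0, 3} ≥ S {0, 1, 3} + S {0} :=
        ssa_of hS {1} {3} {0} _ _ _ (by decide)
      have s3 : S {0, 1, 2} + S {0, 2, 3} ≥ S {0, 1, 2, 3} + S {0, 2} :=
        ssa_of hS {1} {3} {0, 2} _ _ _ (by decide)
      have s4 : S {0, 1, 3} + S {0, 2, 3} ≥ S {0, 1, 2, 3} + S {0, 3} :=
        ssa_of hS {1} {2} {0, 3} _ _ _ (by decide)
      have m1 := mul_nonneg c0 (sub_nonneg.2 s1)
      have m2 := mul_nonneg c1 (sub_nonneg.2 s2)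
      have m3 := mul_nonneg c3 (sub_nonneg.2 s3)
      have m4 := mul_nonneg c2 (sub_nonneg.2 s4)
      simp [Fin.sum_univ_succ]
      ring_nf at m1 m2 m3 m4 ⊢
      linarith
    · intro S _ hS _
      have s1 : S {1, 2} + S {0, 1} ≥ S {0, 1, 2} + S {1} :=
        ssa_of hS {2} {0} {1} _ _ _ (by decide)
      have s2 : S {1, 2} + S {1, 3} ≥ S {1, 2, 3} + S {1} :=
        ssa_of hS {2} {3} {1} _ _ _ (by decide)
      have s3 : S {0, 1, 2} + S {0, 1, 3} ≥ S {0, 1, 2, 3} + S {0, 1} :=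
        ssa_of hS {2} {3} {0, 1} _ _ _ (by decide)
      have s4 : S {1, 2, 3} + S {0, 1, 3} ≥ S {0, 1, 2, 3} + S {1, 3} :=
        ssa_of hS {2} {0} {1, 3} _ _ _ (by decide)
      have m1 := mul_nonneg c0 (sub_nonneg.2 s1)
      have m2 := mul_nonneg c4 (sub_nonneg.2 s2)
      have m3 := mul_nonneg c3 (sub_nonneg.2 s3)
      have m4 := mul_nonneg c2 (sub_nonneg.2 s4)
      simp [Fin.sum_univ_succ]
      ring_nf at m1 m2 m3 m4 ⊢
      linarith
end

section
/- Characterization of the 10-monotone cone (Table 1): a vector α ∈ ℝ^7 with components (α_A, α_B, α_V, α_AB, α_AV, α_BV, α_ABV) is 1A-valid and 0B-valid if and only if α is a nonnegative real linear combination of the eight vectors (1,1,0,−1,0,0,0), (0,0,−1,0,0,1,−1), (1,0,−1,0,0,0,0), (0,1,0,0,0,0,−1), (1,1,0,0,0,−1,0), (0,0,−1,1,0,0,−1), (0,0,0,0,1,0,0), (0,0,0,0,−1,0,0). -/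
/-- Integer-valued entropy functions: the laws can be checked by evaluation. -/
def LawZ (f : Finset (Fin 4) → ℤ) : Prop :=
  f ∅ = 0 ∧ ∀ X Y Z : Finset (Fin 4), Disjoint X Y → Disjoint X Z → Disjoint Y Z →
    f (X ∪ Y ∪ Z) + f Z ≤ f (X ∪ Z) + f (Y ∪ Z) ∧ f X + f Y ≤ f (X ∪ Z) + f (Y ∪ Z)

instance (f : Finset (Fin 4) → ℤ) : Decidable (LawZ f) := by
  unfold LawZ; infer_instance

/-- One-party classical bit at `j`. -/
def indZ (j : Fin 4) (X : Finset (Fin 4)) : ℤ := if j ∈ X then 1 else 0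

/-- A maximally entangled pair between `j` and `k`. -/
def entZ (j k : Fin 4) (X : Finset (Fin 4)) : ℤ :=
  if j ∈ X then (if k ∈ X then 0 else 1) else (if k ∈ X then 1 else 0)

/-- A perfect four-party state on the parties of `T` (and a purifier). -/
def perfZ (T X : Finset (Fin 4)) : ℤ := min ((X ∩ T).card : ℤ) (4 - (X ∩ T).card)

theorem indZ_law : ∀ j, LawZ (indZ j) := by decide +kernel

theorem entZ_law : ∀ j k, j ≠ k → LawZ (entZ j k) := by decide +kernel

theorem perfZ_law : LawZ (perfZ {1, 2, 3}) ∧ LawZ (perfZ {0, 1, 2}) ∧ LawZ (perfZ {0, 2, 3}) ∧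
    LawZ (perfZ {0, 1, 2, 3}) := by decide +kernel

theorem LawZ.valid1A {f : Finset (Fin 4) → ℤ} (h : LawZ f) {α : Fin 7 → ℝ} (hα : Valid1A α)
    (p q r s : ℤ) (hp : f {0, 1} - f {0} = p) (hq : f {0, 1, 2} - f {0, 2} = q)
    (hr : f {1, 2, 3} - f {2, 3} = r) (hs : f {1, 3} - f {3} = s) :
    α 0 * p + α 3 * q - α 5 * r - α 2 * s ≥ 0 := by
  have := hα (fun X => (f X : ℝ)) (by simp [h.1])
    (fun X Y Z h1 h2 h3 => by beta_reduce; exact_mod_cast (h.2 X Y Z h1 h2 h3).1)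
    (fun X Y Z h1 h2 h3 => by beta_reduce; exact_mod_cast (h.2 X Y Z h1 h2 h3).2)
  subst hp hq hr hs
  push_cast
  exact this

theorem LawZ.valid0B {f : Finset (Fin 4) → ℤ} (h : LawZ f) {α : Fin 7 → ℝ} (hα : Valid0B α)
    (p q r s : ℤ) (hp : f {1, 2} - f {1} = p) (hq : f {0, 1, 2} - f {0, 1} = q)
    (hr : f {1, 2, 3} - f {1, 3} = r) (hs : f {0, 1, 2, 3} - f {0, 1, 3} = s) :
    α 1 * p + α 3 * q + α 5 * r + α 6 * s ≥ 0 := by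
  have := hα (fun X => (f X : ℝ)) (by simp [h.1])
    (fun X Y Z h1 h2 h3 => by beta_reduce; exact_mod_cast (h.2 X Y Z h1 h2 h3).1)
    (fun X Y Z h1 h2 h3 => by beta_reduce; exact_mod_cast (h.2 X Y Z h1 h2 h3).2)
  subst hp hq hr hs
  push_cast
  exact this

/-- Membership in the cone from explicit coordinates. -/
theorem pos_part_split (t : ℝ) : 0 ≤ max t 0 ∧ 0 ≤ max (-t) 0 ∧ max t 0 - max (-t) 0 = t ∧
    max t 0 + max (-t) 0 = |t| := by
  rcases le_total t 0 with h | h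
  · simp [h, abs_of_nonpos]
  · simp [h, abs_of_nonneg]

/-- Characterization of the 10-monotone cone: `α` is 1A-valid and 0B-valid iff it is a
nonnegative linear combination of the eight extreme rays of Table 1. -/
theorem cone10_characterization (α : Fin 7 → ℝ) :
    (Valid1A α ∧ Valid0B α) ↔
      ∃ c : Fin 8 → ℝ, (∀ i, 0 ≤ c i) ∧
        α = ∑ i, c i • (![![1, 1, 0, -1, 0, 0, 0], ![0, 0, -1, 0, 0, 1, -1],
          ![1, 0, -1, 0, 0, 0, 0], ![0, 1, 0, 0, 0, 0, -1], ![1, 1, 0, 0, 0, -1, 0],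
          ![0, 0, -1, 1, 0, 0, -1], ![0, 0, 0, 0, 1, 0, 0],
          ![0, 0, 0, 0, -1, 0, 0]] : Fin 8 → Fin 7 → ℝ) i := by
  constructor
  · rintro ⟨hA, hB⟩
    have e1 := (indZ_law 1).valid1A hA 1 1 1 1 (by decide) (by decide) (by decide) (by decide)
    have e2 := (entZ_law 1 0 (by decide)).valid1A hA (-1) (-1) 1 1
      (by decide) (by decide) (by decide) (by decide)
    have e3 := (entZ_law 1 3 (by decide)).valid1A hA 1 1 (-1) (-1)
      (by decide) (by decide) (by decide) (by decide)
    have e4 := (entZ_law 1 2 (by decide)).valid1A hA 1 (-1) (-1) 1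
      (by decide) (by decide) (by decide) (by decide)
    have e5 := perfZ_law.1.valid1A hA 1 1 (-1) 1
      (by decide) (by decide) (by decide) (by decide)
    have e6 := perfZ_law.2.1.valid1A hA 1 (-1) 1 1
      (by decide) (by decide) (by decide) (by decide)
    have f1 := (indZ_law 2).valid0B hB 1 1 1 1 (by decide) (by decide) (by decide) (by decide)
    have f2 := (entZ_law 2 1 (by decide)).valid0B hB (-1) (-1) (-1) (-1)
      (by decide) (by decide) (by decide) (by decide)
    have f3 := (entZ_law 2 0 (by decide)).valid0B hB 1 (-1) 1 (-1)
      (by decide) (by decide) (by decide) (by decide)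
    have f4 := (entZ_law 2 3 (by decide)).valid0B hB 1 1 (-1) (-1)
      (by decide) (by decide) (by decide) (by decide)
    have f5 := perfZ_law.2.2.1.valid0B hB 1 1 1 (-1)
      (by decide) (by decide) (by decide) (by decide)
    have f6 := perfZ_law.2.2.2.valid0B hB 1 (-1) (-1) (-1)
      (by decide) (by decide) (by decide) (by decide)
    push_cast at e1 e2 e3 e4 e5 e6 f1 f2 f3 f4 f5 f6
    obtain ⟨x1, x2, x3, x4⟩ := pos_part_split (α 3)
    obtain ⟨y1, y2, y3, y4⟩ := pos_part_split (α 5)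
    obtain ⟨t1, t2, t3, t4⟩ := pos_part_split (α 0 - α 1)
    obtain ⟨z1, z2, z3, z4⟩ := pos_part_split (α 4)
    have key : |α 3| + |α 5| + |α 0 - α 1| ≤ α 0 - α 6 := by
      rcases abs_cases (α 3) with ⟨h1, _⟩ | ⟨h1, _⟩ <;>
      rcases abs_cases (α 5) with ⟨h2, _⟩ | ⟨h2, _⟩ <;>
      rcases abs_cases (α 0 - α 1) with ⟨h3, _⟩ | ⟨h3, _⟩ <;>
      rw [h1, h2, h3] <;> linarith
    rw [← x4, ← y4, ← t4] at key
    generalize max (α 3) 0 = xp at *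
    generalize max (-α 3) 0 = xm at *
    generalize max (α 5) 0 = yp at *
    generalize max (-α 5) 0 = ym at *
    generalize max (α 0 - α 1) 0 = tp at *
    generalize max (-(α 0 - α 1)) 0 = tm at *
    generalize max (α 4) 0 = zp at *
    generalize max (-α 4) 0 = zm at *
    obtain ⟨k, hk⟩ : ∃ k, k = (α 0 - α 6 - (xp + xm + (yp + ym) + (tp + tm))) / 2 := ⟨_, rfl⟩
    refine ⟨![xm + k, yp, tp, tm, ym, xp + k, zp, zm], ?_, ?_⟩
    · intro i
      fin_cases i <;> simp <;> linarith
    · funext i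
      fin_cases i <;> simp [Fin.sum_univ_succ] <;> linarith
  · rintro ⟨c, hc, rfl⟩
    have c0 := hc 0
    have c1 := hc 1
    have c2 := hc 2
    have c3 := hc 3
    have c4 := hc 4
    have c5 := hc 5
    constructor
    · intro S h0 hS hW
      have r1 := hS {1} {2} {0} (by decide) (by decide) (by decide)
      have r2 := hS {1} {2} {3} (by decide) (by decide) (by decide)
      have r3 := hW {0} {3} {1} (by decide) (by decide) (by decide)
      have r5 := hW {0} {2, 3} {1} (by decide) (by decide) (by decide)
      have r6 := hW {0, 2} {3} {1} (by decide) (by decide) (by decide)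
      rw [show ({1} ∪ {0} : Finset (Fin 4)) = {0, 1} by decide,
        show ({2} ∪ {0} : Finset (Fin 4)) = {0, 2} by decide,
        show ({1} ∪ {2} ∪ {0} : Finset (Fin 4)) = {0, 1, 2} by decide] at r1
      rw [show ({1} ∪ {3} : Finset (Fin 4)) = {1, 3} by decide,
        show ({2} ∪ {3} : Finset (Fin 4)) = {2, 3} by decide,
        show ({1} ∪ {2} ∪ {3} : Finset (Fin 4)) = {1, 2, 3} by decide] at r2
      rw [show ({0} ∪ {1} : Finset (Fin 4)) = {0, 1} by decide,
        show ({3} ∪ {1} : Finset (Fin 4)) = {1, 3} by decide] at r3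
      rw [show ({0} ∪ {1} : Finset (Fin 4)) = {0, 1} by decide,
        show ({2, 3} ∪ {1} : Finset (Fin 4)) = {1, 2, 3} by decide] at r5
      rw [show ({0, 2} ∪ {1} : Finset (Fin 4)) = {0, 1, 2} by decide,
        show ({3} ∪ {1} : Finset (Fin 4)) = {1, 3} by decide] at r6
      have m1 := mul_nonneg c0 (sub_nonneg.2 r1)
      have m2 := mul_nonneg c1 (sub_nonneg.2 r2)
      have m3 := mul_nonneg c2 (sub_nonneg.2 r3)
      have m5 := mul_nonneg c4 (sub_nonneg.2 r5)
      have m6 := mul_nonneg c5 (sub_nonneg.2 r6)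
      simp [Fin.sum_univ_eight]
      linarith
    · intro S h0 hS hW
      have r1 := hS {2} {0} {1} (by decide) (by decide) (by decide)
      have r2 := hS {2} {0} {1, 3} (by decide) (by decide) (by decide)
      have r5 := hS {2} {3} {1} (by decide) (by decide) (by decide)
      have r6 := hS {2} {3} {0, 1} (by decide) (by decide) (by decide)
      rw [show ({2} ∪ {1} : Finset (Fin 4)) = {1, 2} by decide,
        show ({0} ∪ {1} : Finset (Fin 4)) = {0, 1} by decide,
        show ({2} ∪ {0} ∪ {1} : Finset (Fin 4)) = {0, 1, 2} by decide] at r1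
      rw [show ({2} ∪ {1, 3} : Finset (Fin 4)) = {1, 2, 3} by decide,
        show ({0} ∪ {1, 3} : Finset (Fin 4)) = {0, 1, 3} by decide,
        show ({2} ∪ {0} ∪ {1, 3} : Finset (Fin 4)) = {0, 1, 2, 3} by decide] at r2
      rw [show ({2} ∪ {1} : Finset (Fin 4)) = {1, 2} by decide,
        show ({3} ∪ {1} : Finset (Fin 4)) = {1, 3} by decide,
        show ({2} ∪ {3} ∪ {1} : Finset (Fin 4)) = {1, 2, 3} by decide] at r5
      rw [show ({2} ∪ {0, 1} : Finset (Fin 4)) = {0, 1, 2} by decide,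
        show ({3} ∪ {0, 1} : Finset (Fin 4)) = {0, 1, 3} by decide,
        show ({2} ∪ {3} ∪ {0, 1} : Finset (Fin 4)) = {0, 1, 2, 3} by decide] at r6
      have m1 := mul_nonneg c0 (sub_nonneg.2 r1)
      have m2 := mul_nonneg c1 (sub_nonneg.2 r2)
      have m3 := mul_nonneg c3 (sub_nonneg.2 r1)
      have m4 := mul_nonneg c3 (sub_nonneg.2 r6)
      have m5 := mul_nonneg c4 (sub_nonneg.2 r5)
      have m6 := mul_nonneg c5 (sub_nonneg.2 r6)
      simp [Fin.sum_univ_eight]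
      linarith
end

section
/- Characterization of the cone C ∩ 00 (Table 2): a vector α ∈ ℝ^7 with components (α_A, α_B, α_V, α_AB, α_AV, α_BV, α_ABV) is 0A-valid, 0B-valid, and satisfies α_V + α_AV + α_BV + α_ABV ≥ 0 if and only if α is a nonnegative real linear combination of the six vectors (0,0,1,0,0,0,0), (1,1,0,−1,0,0,0), (0,0,−1,0,1,1,−1), (0,0,1,1,0,0,−1), (0,1,1,0,0,−1,0), (1,0,1,0,−1,0,0). -/
/-- Entropy of a classical bit shared by the parties in `T`. -/
noncomputable def fT (T X : Finset (Fin 4)) : ℝ := if Disjoint X T then 0 else 1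

/-- Entropy of the GHZ state on the parties in `T`. -/
noncomputable def gT (T X : Finset (Fin 4)) : ℝ := if Disjoint X T ∨ T ⊆ X then 0 else 1

theorem fT_ssa (T) : SSAfn (fT T) := by
  intro X Y Z _ _ _
  simp only [fT, Finset.disjoint_union_left]
  by_cases hX : Disjoint X T <;> by_cases hY : Disjoint Y T <;> by_cases hZ : Disjoint Z T <;>
    simp [hX, hY, hZ]

theorem fT_wm (T) : WMfn (fT T) := by
  intro X Y Z _ _ _
  simp only [fT, Finset.disjoint_union_left]
  by_cases hX : Disjoint X T <;> by_cases hY : Disjoint Y T <;> by_cases hZ : Disjoint Z T <;>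
    simp [hX, hY, hZ]

theorem gT_ssa (T) : SSAfn (gT T) := by
  intro X Y Z hXY _ _
  have h1 : T ⊆ X ∪ Z → T ⊆ X ∪ Y ∪ Z := fun h => h.trans (by grind)
  have h2 : T ⊆ Y ∪ Z → T ⊆ X ∪ Y ∪ Z := fun h => h.trans (by grind)
  have h3 : T ⊆ X ∪ Z → T ⊆ Y ∪ Z → T ⊆ Z := by
    intro a b t ht
    have := a ht; have := b ht
    have : t ∈ X → t ∉ Y := fun hx => Finset.disjoint_left.1 hXY hx
    grind
  have h4 : T ⊆ Z → T ⊆ X ∪ Z := fun h => h.trans (by grind)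
  have h5 : T ⊆ Z → T ⊆ Y ∪ Z := fun h => h.trans (by grind)
  have h6 : Disjoint X T → Disjoint Z T → T ⊆ X ∪ Y ∪ Z → T ⊆ Y ∪ Z := by
    intro a b c t ht
    have := c ht
    have := Finset.disjoint_right.1 a ht
    grind
  have h7 : Disjoint Y T → Disjoint Z T → T ⊆ X ∪ Y ∪ Z → T ⊆ X ∪ Z := by
    intro a b c t ht
    have := c ht
    have := Finset.disjoint_right.1 a ht
    grind
  have h8 : Disjoint X T → T ⊆ X ∪ Y ∪ Z → T ⊆ Y ∪ Z := by
    intro a c t ht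
    have := c ht
    have := Finset.disjoint_right.1 a ht
    grind
  have h9 : Disjoint Y T → T ⊆ X ∪ Y ∪ Z → T ⊆ X ∪ Z := by
    intro a c t ht
    have := c ht
    have := Finset.disjoint_right.1 a ht
    grind
  have h10 : Disjoint Z T → T ⊆ Z → Disjoint X T ∧ Disjoint Y T := by
    intro a b
    have : T = ∅ := by
      ext t; have : t ∈ T → t ∉ Z := fun hx => Finset.disjoint_right.1 a hx
      grind
    subst this; simp
  have h11 : Disjoint Z T → T ⊆ X ∪ Z → T ⊆ X := by
    intro a c t ht
    have := c ht
    have := Finset.disjoint_right.1 a ht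
    grind
  have h12 : Disjoint Z T → T ⊆ Y ∪ Z → T ⊆ Y := by
    intro a c t ht
    have := c ht
    have := Finset.disjoint_right.1 a ht
    grind
  have h13 : T ⊆ X → Disjoint Y T := fun h => (hXY.symm.mono_right h)
  have h14 : T ⊆ Y → Disjoint X T := fun h => (hXY.mono_right h)
  simp only [gT, Finset.disjoint_union_left]
  split_ifs <;> first | (norm_num; done) | (exfalso; clear hXY; grind only)

theorem gT_wm (T) : WMfn (gT T) := by
  intro X Y Z hXY hXZ hYZ
  have h1 : T ⊆ X → T ⊆ X ∪ Z := fun h => h.trans (by grind)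
  have h2 : T ⊆ Y → T ⊆ Y ∪ Z := fun h => h.trans (by grind)
  have h3 : T ⊆ X ∪ Z → Disjoint Y T := fun h =>
    (Finset.disjoint_union_right.2 ⟨hXY.symm, hYZ⟩).mono_right h
  have h4 : T ⊆ Y ∪ Z → Disjoint X T := fun h =>
    (Finset.disjoint_union_right.2 ⟨hXY, hXZ⟩).mono_right h
  have h5 : Disjoint X T → T ⊆ X ∪ Z → T ⊆ Z := by
    intro a c t ht
    have := c ht
    have := Finset.disjoint_right.1 a ht
    grind
  have h6 : Disjoint Y T → T ⊆ Y ∪ Z → T ⊆ Z := by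
    intro a c t ht
    have := c ht
    have := Finset.disjoint_right.1 a ht
    grind
  have h8 : Disjoint Z T → T ⊆ X ∪ Z → T ⊆ X := by
    intro a c t ht
    have := c ht
    have := Finset.disjoint_right.1 a ht
    grind
  have h9 : Disjoint Z T → T ⊆ Y ∪ Z → T ⊆ Y := by
    intro a c t ht
    have := c ht
    have := Finset.disjoint_right.1 a ht
    grind
  have h7 : T ⊆ Z → Disjoint X T ∧ Disjoint Y T :=
    fun h => ⟨hXZ.mono_right h, hYZ.mono_right h⟩
  simp only [gT, Finset.disjoint_union_left]
  split_ifs <;> first | (norm_num; done) | (exfalso; clear hXY; grind only)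

/-- Characterization of the cone `C ∩ 00`: `α` is 0A-valid, 0B-valid and non-negative in
`V` iff it is a nonnegative linear combination of the six extreme rays of Table 2. -/
theorem coneC00_characterization (α : Fin 7 → ℝ) :
    (Valid0A α ∧ Valid0B α ∧ α 2 + α 4 + α 5 + α 6 ≥ 0) ↔
      ∃ c : Fin 6 → ℝ, (∀ i, 0 ≤ c i) ∧
        α = ∑ i, c i • (![![0, 0, 1, 0, 0, 0, 0], ![1, 1, 0, -1, 0, 0, 0],
          ![0, 0, -1, 0, 1, 1, -1], ![0, 0, 1, 1, 0, 0, -1], ![0, 1, 1, 0, 0, -1, 0],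
          ![1, 0, 1, 0, -1, 0, 0]] : Fin 6 → Fin 7 → ℝ) i := by
  constructor
  · rintro ⟨hA, hB, hV⟩
    have f0 : ∀ T, fT T ∅ = 0 := fun T => by simp [fT]
    have g0 : ∀ T, gT T ∅ = 0 := fun T => by simp [gT]
    have a1 := hA _ (f0 {1}) (fT_ssa _) (fT_wm _)
    have a2 := hA _ (f0 {1, 2, 3}) (fT_ssa _) (fT_wm _)
    have a3 := hA _ (f0 {1, 2}) (fT_ssa _) (fT_wm _)
    have a4 := hA _ (f0 {1, 3}) (fT_ssa _) (fT_wm _)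
    have a5 := hA _ (g0 {0, 1}) (gT_ssa _) (gT_wm _)
    have a6 := hA _ (g0 {0, 1, 2, 3}) (gT_ssa _) (gT_wm _)
    have b1 := hB _ (f0 {2}) (fT_ssa _) (fT_wm _)
    have b2 := hB _ (f0 {0, 2, 3}) (fT_ssa _) (fT_wm _)
    have b4 := hB _ (f0 {2, 3}) (fT_ssa _) (fT_wm _)
    have b5 := hB _ (g0 {1, 2}) (gT_ssa _) (gT_wm _)
    simp [fT, gT, Finset.subset_iff] at a1 a2 a3 a4 a5 a6 b1 b2 b4 b5
    obtain ⟨t, t1, t2, t3, t4, t5⟩ : ∃ t : ℝ, 0 ≤ t ∧ t ≤ α 0 ∧ t ≤ α 1 ∧ -α 3 ≤ t ∧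
        t ≤ -α 6 - α 3 := by
      rcases le_total (α 3) 0 with h | h
      · exact ⟨-α 3, by linarith, by linarith, by linarith, by linarith, by linarith⟩
      · exact ⟨0, by linarith, by linarith, by linarith, by linarith, by linarith⟩
    refine ⟨![α 2 + α 4 + α 5 + α 6, t, -α 6 - α 3 - t, α 3 + t, α 1 - t, α 0 - t], ?_, ?_⟩
    · intro i
      fin_cases i <;> simp <;> linarith
    · funext j
      fin_cases j <;> simp [Fin.sum_univ_succ] <;> linarith
  · rintro ⟨c, hc, h⟩
    have e0 : α 0 = c 1 + c 5 := by rw [h]; simp [Fin.sum_univ_six]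
    have e1 : α 1 = c 1 + c 4 := by rw [h]; simp [Fin.sum_univ_six]
    have e2 : α 2 = c 0 - c 2 + c 3 + c 4 + c 5 := by rw [h]; simp [Fin.sum_univ_six]; try ring
    have e3 : α 3 = -c 1 + c 3 := by rw [h]; simp [Fin.sum_univ_six]
    have e4 : α 4 = c 2 - c 5 := by rw [h]; simp [Fin.sum_univ_six]; try ring
    have e5 : α 5 = c 2 - c 4 := by rw [h]; simp [Fin.sum_univ_six]; try ring
    have e6 : α 6 = -c 2 - c 3 := by rw [h]; simp [Fin.sum_univ_six]; try ring
    clear h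
    refine ⟨?_, ?_, ?_⟩
    · intro S _ hS _
      rw [e0, e3, e4, e6]
      have s1 := hS {1} {2} {0} (by decide) (by decide) (by decide)
      have s2 := hS {1} {2} {0, 3} (by decide) (by decide) (by decide)
      have s3 := hS {1} {3} {0, 2} (by decide) (by decide) (by decide)
      have s4 := hS {1} {3} {0} (by decide) (by decide) (by decide)
      rw [show ({1} ∪ {0} : Finset (Fin 4)) = {0, 1} by decide,
        show ({2} ∪ {0} : Finset (Fin 4)) = {0, 2} by decide,
        show ({1} ∪ {2} ∪ {0} : Finset (Fin 4)) = {0, 1, 2} by decide] at s1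
      rw [show ({1} ∪ {0, 3} : Finset (Fin 4)) = {0, 1, 3} by decide,
        show ({2} ∪ {0, 3} : Finset (Fin 4)) = {0, 2, 3} by decide,
        show ({1} ∪ {2} ∪ {0, 3} : Finset (Fin 4)) = {0, 1, 2, 3} by decide] at s2
      rw [show ({1} ∪ {0, 2} : Finset (Fin 4)) = {0, 1, 2} by decide,
        show ({3} ∪ {0, 2} : Finset (Fin 4)) = {0, 2, 3} by decide,
        show ({1} ∪ {3} ∪ {0, 2} : Finset (Fin 4)) = {0, 1, 2, 3} by decide] at s3
      rw [show ({1} ∪ {0} : Finset (Fin 4)) = {0, 1} by decide,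
        show ({3} ∪ {0} : Finset (Fin 4)) = {0, 3} by decide,
        show ({1} ∪ {3} ∪ {0} : Finset (Fin 4)) = {0, 1, 3} by decide] at s4
      have m1 := mul_nonneg (hc 1) (sub_nonneg.2 s1)
      have m2 := mul_nonneg (hc 2) (sub_nonneg.2 s2)
      have m3 := mul_nonneg (hc 3) (sub_nonneg.2 s3)
      have m4 := mul_nonneg (hc 5) (sub_nonneg.2 s4)
      linarith
    · intro S _ hS _
      rw [e1, e3, e5, e6]
      have s1 := hS {2} {0} {1} (by decide) (by decide) (by decide)
      have s2 := hS {2} {0} {1, 3} (by decide) (by decide) (by decide)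
      have s3 := hS {2} {3} {0, 1} (by decide) (by decide) (by decide)
      have s4 := hS {2} {3} {1} (by decide) (by decide) (by decide)
      rw [show ({2} ∪ {1} : Finset (Fin 4)) = {1, 2} by decide,
        show ({0} ∪ {1} : Finset (Fin 4)) = {0, 1} by decide,
        show ({2} ∪ {0} ∪ {1} : Finset (Fin 4)) = {0, 1, 2} by decide] at s1
      rw [show ({2} ∪ {1, 3} : Finset (Fin 4)) = {1, 2, 3} by decide,
        show ({0} ∪ {1, 3} : Finset (Fin 4)) = {0, 1, 3} by decide,
        show ({2} ∪ {0} ∪ {1, 3} : Finset (Fin 4)) = {0, 1, 2, 3} by decide] at s2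
      rw [show ({2} ∪ {0, 1} : Finset (Fin 4)) = {0, 1, 2} by decide,
        show ({3} ∪ {0, 1} : Finset (Fin 4)) = {0, 1, 3} by decide,
        show ({2} ∪ {3} ∪ {0, 1} : Finset (Fin 4)) = {0, 1, 2, 3} by decide] at s3
      rw [show ({2} ∪ {1} : Finset (Fin 4)) = {1, 2} by decide,
        show ({3} ∪ {1} : Finset (Fin 4)) = {1, 3} by decide,
        show ({2} ∪ {3} ∪ {1} : Finset (Fin 4)) = {1, 2, 3} by decide] at s4
      have m1 := mul_nonneg (hc 1) (sub_nonneg.2 s1)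
      have m2 := mul_nonneg (hc 2) (sub_nonneg.2 s2)
      have m3 := mul_nonneg (hc 3) (sub_nonneg.2 s3)
      have m4 := mul_nonneg (hc 4) (sub_nonneg.2 s4)
      linarith
    · have := hc 0
      rw [e2, e4, e5, e6]; linarith
end

section
/- Characterization of the cone C ∩ 10 (Table 2): a vector α ∈ ℝ^7 with components (α_A, α_B, α_V, α_AB, α_AV, α_BV, α_ABV) is 1A-valid, 0B-valid, and satisfies α_V + α_AV + α_BV + α_ABV ≥ 0 if and only if α is a nonnegative real linear combination of the seven vectors (0,0,0,0,1,0,0), (1,1,0,−1,0,0,0), (0,0,−1,0,1,1,−1), (1,1,0,0,1,−1,0), (0,0,−1,1,2,0,−1), (0,1,0,0,1,0,−1), (1,0,−1,0,1,0,0). -/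
/-- Entropy of a classical bit shared by the parties in `I`. -/
noncomputable def classS (I : Finset (Fin 4)) (X : Finset (Fin 4)) : ℝ :=
  if Disjoint X I then 0 else 1

/-- Entropy of a GHZ state shared by the parties in `I`. -/
noncomputable def ghzS (I : Finset (Fin 4)) (X : Finset (Fin 4)) : ℝ :=
  if Disjoint X I ∨ I ⊆ X then 0 else 1

theorem classS_ssa (I : Finset (Fin 4)) : SSAfn (classS I) := by
  intro X Y Z _ _ _
  simp only [classS, Finset.disjoint_union_left]
  by_cases hX : Disjoint X I <;> by_cases hY : Disjoint Y I <;> by_cases hZ : Disjoint Z I <;>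
    simp [hX, hY, hZ]

theorem classS_wm (I : Finset (Fin 4)) : WMfn (classS I) := by
  intro X Y Z _ _ _
  simp only [classS, Finset.disjoint_union_left]
  by_cases hX : Disjoint X I <;> by_cases hY : Disjoint Y I <;> by_cases hZ : Disjoint Z I <;>
    simp [hX, hY, hZ]

theorem ghzS_ssa (I : Finset (Fin 4)) : SSAfn (ghzS I) := by
  intro X Y Z h1 h2 h3
  simp only [ghzS, Finset.disjoint_left, Finset.subset_iff, Finset.mem_union] at *
  split_ifs <;> first | (norm_num; done) | (exfalso; grind)

theorem ghzS_wm (I : Finset (Fin 4)) : WMfn (ghzS I) := by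
  intro X Y Z h1 h2 h3
  simp only [ghzS, Finset.disjoint_left, Finset.subset_iff, Finset.mem_union] at *
  split_ifs <;> first | (norm_num; done) | (exfalso; grind)

/-- Characterization of the cone `C ∩ 10`: `α` is 1A-valid, 0B-valid and non-negative in
`V` iff it is a nonnegative linear combination of the seven extreme rays of Table 2. -/
theorem coneC10_characterization (α : Fin 7 → ℝ) :
    (Valid1A α ∧ Valid0B α ∧ α 2 + α 4 + α 5 + α 6 ≥ 0) ↔
      ∃ c : Fin 7 → ℝ, (∀ i, 0 ≤ c i) ∧
        α = ∑ i, c i • (![![0, 0, 0, 0, 1, 0, 0], ![1, 1, 0, -1, 0, 0, 0],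
          ![0, 0, -1, 0, 1, 1, -1], ![1, 1, 0, 0, 1, -1, 0], ![0, 0, -1, 1, 2, 0, -1],
          ![0, 1, 0, 0, 1, 0, -1], ![1, 0, -1, 0, 1, 0, 0]] : Fin 7 → Fin 7 → ℝ) i := by
  constructor
  · rintro ⟨hA, hB, hC⟩
    have h1 := hA (ghzS {0, 1}) (by simp [ghzS]) (ghzS_ssa _) (ghzS_wm _)
    simp +decide [ghzS] at h1
    have h2 := hA (ghzS {1, 3}) (by simp [ghzS]) (ghzS_ssa _) (ghzS_wm _)
    simp +decide [ghzS] at h2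
    have h3 := hA (classS {0, 1, 2}) (by simp [classS]) (classS_ssa _) (classS_wm _)
    simp +decide [classS] at h3
    have h4 := hA (ghzS {0, 1, 2}) (by simp [ghzS]) (ghzS_ssa _) (ghzS_wm _)
    simp +decide [ghzS] at h4
    have h5 := hA (classS {0, 1}) (by simp [classS]) (classS_ssa _) (classS_wm _)
    simp +decide [classS] at h5
    have h6 := hA (classS {1, 2, 3}) (by simp [classS]) (classS_ssa _) (classS_wm _)
    simp +decide [classS] at h6
    have h7 := hB (ghzS {1, 2}) (by simp [ghzS]) (ghzS_ssa _) (ghzS_wm _)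
    simp +decide [ghzS] at h7
    have h8 := hB (classS {2}) (by simp [classS]) (classS_ssa _) (classS_wm _)
    simp +decide [classS] at h8
    have h9 := hB (classS {0, 2, 3}) (by simp [classS]) (classS_ssa _) (classS_wm _)
    simp +decide [classS] at h9
    have h10 := hB (classS {2, 3}) (by simp [classS]) (classS_ssa _) (classS_wm _)
    simp +decide [classS] at h10
    have h11 := hB (classS {0, 2}) (by simp [classS]) (classS_ssa _) (classS_wm _)
    simp +decide [classS] at h11
    have h12 := hB (ghzS {0, 1, 2, 3}) (by simp [ghzS]) (ghzS_ssa _) (ghzS_wm _)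
    simp +decide [ghzS] at h12
    have e1 : α 2 = -(α 0 + α 3 + α 5) := by linarith
    have e2 : α 6 = -(α 1 + α 3 + α 5) := by linarith
    refine ⟨![α 2 + α 4 + α 5 + α 6, max 0 (-α 3), max 0 (α 5), max 0 (-α 5), max 0 (α 3),
      α 1 - max 0 (-α 3) - max 0 (-α 5), α 0 - max 0 (-α 3) - max 0 (-α 5)], ?_, ?_⟩
    · intro i
      rcases le_total 0 (α 3) with h | h <;> rcases le_total 0 (α 5) with h' | h' <;>
        fin_cases i <;> simp [h, h'] <;> linarith
    · ext j
      rcases le_total 0 (α 3) with h | h <;> rcases le_total 0 (α 5) with h' | h' <;>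
        fin_cases j <;> simp [h, h', Fin.sum_univ_succ] <;> linarith
  · rintro ⟨c, hc, rfl⟩
    have c0 := hc 0
    have c1 := hc 1
    have c2 := hc 2
    have c3 := hc 3
    have c4 := hc 4
    have c5 := hc 5
    have c6 := hc 6
    refine ⟨?_, ?_, ?_⟩
    · intro S h0 hs hw
      have g1 : S {0, 1} + S {0, 2} ≥ S {0, 1, 2} + S {0} := by
        have h := hs {1} {2} {0} (by decide) (by decide) (by decide)
        convert h using 3 <;> decide
      have g2 : S {1, 3} + S {2, 3} ≥ S {1, 2, 3} + S {3} := by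
        have h := hs {1} {2} {3} (by decide) (by decide) (by decide)
        convert h using 3 <;> decide
      have g3 : S {0, 1} + S {1, 2, 3} ≥ S {0} + S {2, 3} := by
        have h := hw {0} {2, 3} {1} (by decide) (by decide) (by decide)
        convert h using 3 <;> decide
      have g4 : S {0, 1, 2} + S {1, 3} ≥ S {0, 2} + S {3} := by
        have h := hw {0, 2} {3} {1} (by decide) (by decide) (by decide)
        convert h using 3 <;> decide
      have g6 : S {0, 1} + S {1, 3} ≥ S {0} + S {3} := by
        have h := hw {0} {3} {1} (by decide) (by decide) (by decide)
        convert h using 3 <;> decide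
      have k1 := mul_nonneg c1 (sub_nonneg.2 g1)
      have k2 := mul_nonneg c2 (sub_nonneg.2 g2)
      have k3 := mul_nonneg c3 (sub_nonneg.2 g3)
      have k4 := mul_nonneg c4 (sub_nonneg.2 g4)
      have k6 := mul_nonneg c6 (sub_nonneg.2 g6)
      simp [Fin.sum_univ_succ]
      linarith
    · intro S h0 hs hw
      have g1 : S {1, 2} + S {0, 1} ≥ S {0, 1, 2} + S {1} := by
        have h := hs {2} {0} {1} (by decide) (by decide) (by decide)
        convert h using 3 <;> decide
      have g2 : S {1, 2, 3} + S {0, 1, 3} ≥ S {0, 1, 2, 3} + S {1, 3} := by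
        have h := hs {2} {0} {1, 3} (by decide) (by decide) (by decide)
        convert h using 3 <;> decide
      have g3 : S {1, 2} + S {1, 3} ≥ S {1, 2, 3} + S {1} := by
        have h := hs {2} {3} {1} (by decide) (by decide) (by decide)
        convert h using 3 <;> decide
      have g4 : S {0, 1, 2} + S {0, 1, 3} ≥ S {0, 1, 2, 3} + S {0, 1} := by
        have h := hs {2} {3} {0, 1} (by decide) (by decide) (by decide)
        convert h using 3 <;> decide
      have g6 : S {1, 2} + S {0, 1, 3} ≥ S {0, 1, 2, 3} + S {1} := by
        have h := hs {2} {0, 3} {1} (by decide) (by decide) (by decide)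
        convert h using 3 <;> decide
      have k1 := mul_nonneg c1 (sub_nonneg.2 g1)
      have k2 := mul_nonneg c2 (sub_nonneg.2 g2)
      have k3 := mul_nonneg c3 (sub_nonneg.2 g3)
      have k4 := mul_nonneg c4 (sub_nonneg.2 g4)
      have k6 := mul_nonneg c5 (sub_nonneg.2 g6)
      simp [Fin.sum_univ_succ]
      linarith
    · simp [Fin.sum_univ_succ]
      linarith
end
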